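/- arXiv:2409.18831 — 3 statements merged into one kernel-verified Lean document; each statement's English description precedes it below -/
import Mathlib

section
/- Let 0 < ε < 1 and 0 < δ < ε²/48 be real numbers. For any x ∈ M with ‖x‖ ≤ 1, ‖x − x*‖₂ ≤ δ, and ‖x − x²‖₂ ≤ δ, there exists a projection p ∈ M such that ‖x − p‖₂ < ε. -/
/-!
Write `x = a + i b` with `a`, `b` self-adjoint. Then `a - a² = Re (x - x²) - b²`, so traciality (for
`‖y*‖₂ = ‖y‖₂`) and `‖b y‖₂ ≤ ‖b‖ ‖y‖₂` bound `‖a - a²‖₂` by `‖x - x²‖₂ + ‖x‖ ‖b‖₂`.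
For `p` take the spectral projection of `a` for `[1/2, ∞)`, encoded as the projection onto the
kernel of `(2a - 1)⁻`. On the spectrum `|t - 1_{t ≥ 1/2}| ≤ 2 |t - t²|`, hence
`‖a - p‖₂ ≤ 2 ‖a - a²‖₂`. As `‖b‖₂ = ‖x - x*‖₂ / 2`, the distance `‖x - p‖₂` is linear in the two
defects, with total constant `7/2` when `‖x‖ ≤ 1`.
-/

open scoped ComplexOrder

/-- The tracial 2-norm `‖x‖₂ = (τ(x*x))^{1/2}` associated to a linear functional `τ`
on the bounded operators of a Hilbert space. -/
noncomputable def tnorm {H : Type*} [NormedAddCommGroup H] [InnerProductSpace ℂ H]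
    [CompleteSpace H] (τ : (H →L[ℂ] H) →ₗ[ℂ] ℂ) (x : H →L[ℂ] H) : ℝ :=
  Real.sqrt (τ (star x * x)).re

section ComplexStarAlgebra

open scoped ComplexStarModule

variable {A : Type*} [Ring A] [StarRing A] [Algebra ℂ A] [StarModule ℂ A]

theorem coe_realPart_sq (x : A) : (ℜ (x ^ 2) : A) = (ℜ x : A) ^ 2 - (ℑ x : A) ^ 2 := by
  set a : A := (ℜ x : A)
  set b : A := (ℑ x : A)
  have hx : a + Complex.I • b = x := realPart_add_I_smul_imaginaryPart x
  have hsq : x ^ 2 = (a ^ 2 - b ^ 2) + Complex.I • (a * b + b * a) := by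
    simp only [← hx, sq, add_mul, mul_add, smul_mul_assoc, mul_smul_comm, smul_smul, smul_add,
      Complex.I_mul_I, neg_smul, one_smul]
    abel
  have ha : IsSelfAdjoint a := (ℜ x).2
  have hb : IsSelfAdjoint b := (ℑ x).2
  have hre : IsSelfAdjoint (a ^ 2 - b ^ 2) := (ha.pow 2).sub (hb.pow 2)
  have him : IsSelfAdjoint (a * b + b * a) := by
    simp [IsSelfAdjoint, ha.star_eq, hb.star_eq, add_comm]
  rw [hsq, map_add, realPart_I_smul, him.imaginaryPart, neg_zero, add_zero, hre.coe_realPart]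

theorem coe_realPart_sub_sq (x : A) :
    (ℜ x : A) - (ℜ x : A) ^ 2 = ℜ (x - x ^ 2) - (ℑ x : A) ^ 2 := by
  rw [map_sub, AddSubgroupClass.coe_sub, coe_realPart_sq]
  abel

end ComplexStarAlgebra

section OrderedStarAlgebra

theorem one_sub_sq_le_one_sub_sq_sq {R : Type*} [Ring R] [PartialOrder R] [StarRing R]
    [StarOrderedRing R] {d : R} (hd : 0 ≤ d) : (1 - d) ^ 2 ≤ (1 - d ^ 2) ^ 2 := by
  have hd_star : IsSelfAdjoint d := .of_nonneg hd
  have hd_sq : 0 ≤ d ^ 2 := by simpa [sq, hd_star.star_eq] using star_mul_self_nonneg d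
  have hsub : IsSelfAdjoint (1 - d) := .sub (.one R) hd_star
  have hconj : 0 ≤ (1 - d) * (d + d + d ^ 2) * (1 - d) :=
    hsub.conjugate_nonneg (add_nonneg (add_nonneg hd hd) hd_sq)
  rw [← sub_nonneg]
  convert hconj using 1
  noncomm_ring

theorem sub_sq_le_two_nsmul_sub_sq_sq {A : Type*} [CStarAlgebra A] [PartialOrder A]
    [StarOrderedRing A] {a p : A} (ha : IsSelfAdjoint a) (hp : IsStarProjection p)
    (hpa : p * (2 • a - 1) = (2 • a - 1)⁺) :
    (a - p) ^ 2 ≤ (2 • (a - a ^ 2)) ^ 2 := by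
  set h := 2 • a - 1 with h_def
  have hh : IsSelfAdjoint h := .sub ((selfAdjoint A).nsmul_mem ha 2) (.one A)
  have hap : h * p = h⁺ := by
    simpa [hh.star_eq, hp.isSelfAdjoint.star_eq, (CFC.posPart_nonneg h).isSelfAdjoint.star_eq]
      using congrArg star hpa
  have habs : CFC.abs h = 2 • h⁺ - h := by rw [← CFC.abs_add_self h, add_sub_cancel_right]
  have hsq : CFC.abs h ^ 2 = h ^ 2 := by rw [CFC.abs_sq, hh.star_eq, sq]
  have hdist : 4 • (a - p) ^ 2 = (1 - CFC.abs h) ^ 2 := by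
    have hsub : 2 • (a - p) = h - (2 • p - 1) := by rw [h_def, smul_sub]; abel
    calc 4 • (a - p) ^ 2 = (2 • (a - p)) ^ 2 := by noncomm_ring
      _ = h ^ 2 - 2 • (h * p) - 2 • (p * h) + 2 • h + 4 • (p * p) - 4 • p + 1 := by
        rw [hsub]; noncomm_ring
      _ = h ^ 2 - 2 • (2 • h⁺ - h) + 1 := by
        rw [hap, hpa, hp.isIdempotentElem.eq]; noncomm_ring
      _ = (1 - CFC.abs h) ^ 2 := by rw [← habs, ← hsq]; noncomm_ring
  have hdefect : 4 • (2 • (a - a ^ 2)) ^ 2 = (1 - CFC.abs h ^ 2) ^ 2 := by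
    rw [hsq, h_def]; noncomm_ring
  have : (4 : ℝ) • (a - p) ^ 2 ≤ (4 : ℝ) • (2 • (a - a ^ 2)) ^ 2 := by
    simpa only [hdist, hdefect, ofNat_smul_eq_nsmul] using
      one_sub_sq_le_one_sub_sq_sq (CFC.abs_nonneg h)
  exact le_of_smul_le_smul_left this (by norm_num)

end OrderedStarAlgebra

section VonNeumannAlgebra

variable {H : Type*} [NormedAddCommGroup H] [InnerProductSpace ℂ H] [CompleteSpace H]
  (M : VonNeumannAlgebra H)

instance isClosed_coe_toStarSubalgebra : IsClosed (M.toStarSubalgebra : Set (H →L[ℂ] H)) := by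
  rw [M.coe_toStarSubalgebra, ← M.centralizer_centralizer]
  exact Set.isClosed_centralizer _

variable {M}

theorem starProjection_ker_mem {c : H →L[ℂ] H} (hc : c ∈ M) : c.ker.starProjection ∈ M := by
  rw [VonNeumannAlgebra.IsStarProjection.mem_iff isStarProjection_starProjection]
  intro m hm
  rw [Submodule.range_starProjection, Module.End.mem_invtSubmodule_iff_forall_mem_of_mem]
  intro v hv
  have hcm : c (m v) = m (c v) := congr($(VonNeumannAlgebra.mem_commutant_iff.1 hm c hc) v)
  have hcv : c v = 0 := hv
  change c (m v) = 0
  rw [hcm, hcv, map_zero]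

theorem exists_isStarProjection_mul_eq_posPart {h : H →L[ℂ] H} (hhM : h ∈ M)
    (hh : IsSelfAdjoint h) : ∃ p ∈ M, IsStarProjection p ∧ p * h = h⁺ := by
  have hneg : h⁻ ∈ M.toStarSubalgebra := cfcₙ_mem (𝕜' := ℂ) (·⁻ : ℝ → ℝ) hhM
  set p := (h⁻).ker.starProjection
  have hp : IsStarProjection p := isStarProjection_starProjection
  have hp_pos : p * h⁺ = h⁺ := by
    ext v
    exact Submodule.starProjection_eq_self_iff.2 congr($(CFC.negPart_mul_posPart h) v)
  have hneg_p : h⁻ * p = 0 := by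
    ext v
    exact Submodule.starProjection_apply_mem (h⁻).ker v
  have hp_neg : p * h⁻ = 0 := by
    simpa [hp.isSelfAdjoint.star_eq, (CFC.negPart_nonneg h).isSelfAdjoint.star_eq]
      using congrArg star hneg_p
  refine ⟨p, starProjection_ker_mem hneg, hp, ?_⟩
  calc p * h = p * (h⁺ - h⁻) := by rw [CFC.posPart_sub_negPart h]
    _ = h⁺ := by rw [mul_sub, hp_pos, hp_neg, sub_zero]

end VonNeumannAlgebra

section PositiveFunctional

open scoped ComplexStarModule

section StarAlgebra

variable {A : Type*} [Ring A] [StarRing A] [Algebra ℂ A] [StarModule ℂ A] {S : StarSubalgebra ℂ A}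

theorem realPart_mem {x : A} (hx : x ∈ S) : (ℜ x : A) ∈ S := by
  rw [realPart_apply_coe]
  exact S.smul_mem (add_mem hx (star_mem hx)) (2⁻¹ : ℝ)

theorem imaginaryPart_mem {x : A} (hx : x ∈ S) : (ℑ x : A) ∈ S := by
  rw [← neg_neg (ℑ x), ← realPart_I_smul]
  exact neg_mem (realPart_mem (S.smul_mem hx Complex.I))

variable {τ : A →ₗ[ℂ] ℂ}

theorem conj_map_star_mul (hτpos : ∀ x ∈ S, 0 ≤ τ (star x * x)) {y z : A} (hy : y ∈ S)
    (hz : z ∈ S) : starRingEnd ℂ (τ (star z * y)) = τ (star y * z) := by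
  have him {w : A} (hw : w ∈ S) : (τ (star w * w)).im = 0 :=
    (Complex.nonneg_iff.1 (hτpos w hw)).2.symm
  have hadd := him (add_mem hy hz)
  have hadd_I := him (add_mem hy (S.smul_mem hz Complex.I))
  simp only [star_add, star_smul, add_mul, mul_add, smul_mul_assoc, mul_smul_comm, map_add,
    map_smul, smul_eq_mul, Complex.add_im, Complex.mul_im, Complex.mul_re, him hy, him hz,
    Complex.star_def, Complex.conj_I, Complex.neg_re, Complex.neg_im, Complex.I_re,
    Complex.I_im] at hadd hadd_I
  apply Complex.ext
  · rw [Complex.conj_re]; linarith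
  · rw [Complex.conj_im]; linarith

/-- The semi-inner product `⟨y, z⟩ = τ(y*z)` on a star subalgebra on which `τ` is positive; its
seminorm gives the triangle inequality for `‖·‖₂`. -/
noncomputable abbrev semiInnerCore (hτpos : ∀ x ∈ S, 0 ≤ τ (star x * x)) :
    PreInnerProductSpace.Core ℂ S where
  inner y z := τ (star (y : A) * z)
  conj_inner_symm y z := conj_map_star_mul hτpos y.2 z.2
  re_inner_nonneg y := (Complex.nonneg_iff.1 (hτpos y y.2)).1
  add_left := by simp [add_mul]
  smul_left := by simp

end StarAlgebra

theorem re_map_nonneg {A : Type*} [CStarAlgebra A] [PartialOrder A] [StarOrderedRing A]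
    {S : StarSubalgebra ℂ A} [IsClosed (S : Set A)] {τ : A →ₗ[ℂ] ℂ}
    (hτpos : ∀ x ∈ S, 0 ≤ τ (star x * x)) {y : A} (hy : y ∈ S) (hy_nonneg : 0 ≤ y) :
    0 ≤ (τ y).re := by
  have hmem : CFC.sqrt y ∈ S := by
    rw [CFC.sqrt_eq_real_sqrt y]
    exact cfcₙ_mem (𝕜' := ℂ) Real.sqrt hy
  have hsqrt : star (CFC.sqrt y) * CFC.sqrt y = y := by
    rw [(CFC.sqrt_nonneg y).isSelfAdjoint.star_eq, CFC.sqrt_mul_sqrt_self y]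
  simpa only [hsqrt] using (Complex.nonneg_iff.1 (hτpos _ hmem)).1

end PositiveFunctional

section TwoNorm

open scoped ComplexStarModule

variable {H : Type*} [NormedAddCommGroup H] [InnerProductSpace ℂ H] [CompleteSpace H]
  {S : StarSubalgebra ℂ (H →L[ℂ] H)} {τ : (H →L[ℂ] H) →ₗ[ℂ] ℂ}

theorem tnorm_add_le (hτpos : ∀ x ∈ S, 0 ≤ τ (star x * x)) {y z : H →L[ℂ] H} (hy : y ∈ S)
    (hz : z ∈ S) : tnorm τ (y + z) ≤ tnorm τ y + tnorm τ z :=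
  letI := InnerProductSpace.Core.toSeminormedAddCommGroup (c := semiInnerCore hτpos)
  norm_add_le (⟨y, hy⟩ : S) ⟨z, hz⟩

theorem tnorm_smul (c : ℂ) (y : H →L[ℂ] H) : tnorm τ (c • y) = ‖c‖ * tnorm τ y := by
  have h : star (c • y) * (c • y) = ((‖c‖ ^ 2 : ℝ) : ℂ) • (star y * y) := by
    rw [star_smul, smul_mul_smul_comm, Complex.star_def, Complex.conj_mul', Complex.ofReal_pow]
  rw [tnorm, h, map_smul, smul_eq_mul, Complex.re_ofReal_mul, Real.sqrt_mul (sq_nonneg _),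
    Real.sqrt_sq (norm_nonneg c), tnorm]

theorem tnorm_star (hτtr : ∀ x ∈ S, ∀ y ∈ S, τ (x * y) = τ (y * x)) {y : H →L[ℂ] H}
    (hy : y ∈ S) : tnorm τ (star y) = tnorm τ y := by
  rw [tnorm, tnorm, star_star, hτtr y hy _ (star_mem hy)]

theorem tnorm_imaginaryPart (x : H →L[ℂ] H) :
    tnorm τ (ℑ x : H →L[ℂ] H) = tnorm τ (x - star x) / 2 := by
  rw [imaginaryPart_apply_coe, ← Complex.coe_smul, tnorm_smul, tnorm_smul, norm_neg, Complex.norm_I,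
    Complex.norm_real, norm_inv, Real.norm_ofNat]
  ring

theorem tnorm_realPart_le (hτpos : ∀ x ∈ S, 0 ≤ τ (star x * x))
    (hτtr : ∀ x ∈ S, ∀ y ∈ S, τ (x * y) = τ (y * x)) {y : H →L[ℂ] H} (hy : y ∈ S) :
    tnorm τ (ℜ y : H →L[ℂ] H) ≤ tnorm τ y := by
  have h : (ℜ y : H →L[ℂ] H) = (2⁻¹ : ℂ) • (y + star y) := by
    rw [realPart_apply_coe, ← Complex.coe_smul, Complex.ofReal_inv, Complex.ofReal_ofNat]
  have hadd := tnorm_add_le hτpos hy (star_mem hy)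
  rw [tnorm_star hτtr hy] at hadd
  rw [h, tnorm_smul, norm_inv, Complex.norm_ofNat]
  linarith

variable [IsClosed (S : Set (H →L[ℂ] H))]

theorem tnorm_le_tnorm (hτpos : ∀ x ∈ S, 0 ≤ τ (star x * x)) {y z : H →L[ℂ] H} (hy : y ∈ S)
    (hz : z ∈ S) (hle : star y * y ≤ star z * z) : tnorm τ y ≤ tnorm τ z := by
  have h := re_map_nonneg hτpos
    (sub_mem (mul_mem (star_mem hz) hz) (mul_mem (star_mem hy) hy)) (sub_nonneg.2 hle)
  rw [map_sub, Complex.sub_re, sub_nonneg] at h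
  exact Real.sqrt_le_sqrt h

theorem tnorm_mul_le (hτpos : ∀ x ∈ S, 0 ≤ τ (star x * x)) {y z : H →L[ℂ] H} (hy : y ∈ S)
    (hz : z ∈ S) : tnorm τ (y * z) ≤ ‖y‖ * tnorm τ z := by
  have hle : star (y * z) * (y * z) ≤ star ((‖y‖ : ℂ) • z) * ((‖y‖ : ℂ) • z) := by
    calc star (y * z) * (y * z) = star z * (star y * y) * z := by
          simp only [star_mul, mul_assoc]
      _ ≤ ‖star y * y‖ • (star z * z) := CStarAlgebra.star_left_conjugate_le_norm_smul
      _ = star ((‖y‖ : ℂ) • z) * ((‖y‖ : ℂ) • z) := by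
          rw [star_smul, smul_mul_smul_comm, Complex.star_def, Complex.conj_ofReal,
            CStarRing.norm_star_mul_self, ← Complex.coe_smul, Complex.ofReal_mul]
  calc tnorm τ (y * z) ≤ tnorm τ ((‖y‖ : ℂ) • z) :=
        tnorm_le_tnorm hτpos (mul_mem hy hz) (S.smul_mem hz _) hle
    _ = ‖y‖ * tnorm τ z := by rw [tnorm_smul, Complex.norm_real, norm_norm]

theorem tnorm_realPart_sub_sq_le (hτpos : ∀ x ∈ S, 0 ≤ τ (star x * x))
    (hτtr : ∀ x ∈ S, ∀ y ∈ S, τ (x * y) = τ (y * x)) {x : H →L[ℂ] H} (hx : x ∈ S) :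
    tnorm τ ((ℜ x : H →L[ℂ] H) - (ℜ x : H →L[ℂ] H) ^ 2) ≤
      tnorm τ (x - x ^ 2) + ‖x‖ * tnorm τ (ℑ x : H →L[ℂ] H) := by
  set b : H →L[ℂ] H := (ℑ x : H →L[ℂ] H)
  have hb : b ∈ S := imaginaryPart_mem hx
  have hq : x - x ^ 2 ∈ S := sub_mem hx (pow_mem hx 2)
  calc tnorm τ ((ℜ x : H →L[ℂ] H) - (ℜ x : H →L[ℂ] H) ^ 2)
      = tnorm τ ((ℜ (x - x ^ 2) : H →L[ℂ] H) + -b * b) := by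
        rw [coe_realPart_sub_sq, sub_eq_add_neg, sq b, neg_mul]
    _ ≤ tnorm τ (ℜ (x - x ^ 2) : H →L[ℂ] H) + tnorm τ (-b * b) :=
        tnorm_add_le hτpos (realPart_mem hq) (mul_mem (neg_mem hb) hb)
    _ ≤ tnorm τ (x - x ^ 2) + ‖-b‖ * tnorm τ b :=
        add_le_add (tnorm_realPart_le hτpos hτtr hq) (tnorm_mul_le hτpos (neg_mem hb) hb)
    _ ≤ tnorm τ (x - x ^ 2) + ‖x‖ * tnorm τ b := by
        rw [norm_neg]
        gcongr
        · exact Real.sqrt_nonneg _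
        · exact imaginaryPart.norm_le x

variable {M : VonNeumannAlgebra H}

theorem exists_isStarProjection_tnorm_sub_le (hτpos : ∀ x ∈ M, 0 ≤ τ (star x * x))
    {a : H →L[ℂ] H} (haM : a ∈ M) (ha : IsSelfAdjoint a) :
    ∃ p ∈ M, IsStarProjection p ∧ tnorm τ (a - p) ≤ 2 * tnorm τ (a - a ^ 2) := by
  obtain ⟨p, hpM, hp, hpos⟩ := exists_isStarProjection_mul_eq_posPart
    (sub_mem (nsmul_mem haM 2) (one_mem M)) (.sub ((selfAdjoint _).nsmul_mem ha 2) (.one _))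
  refine ⟨p, hpM, hp, ?_⟩
  have hle := sub_sq_le_two_nsmul_sub_sq_sq ha hp hpos
  have hap : IsSelfAdjoint (a - p) := ha.sub hp.isSelfAdjoint
  have hdefect : IsSelfAdjoint (2 • (a - a ^ 2)) :=
    (selfAdjoint _).nsmul_mem (ha.sub (ha.pow 2)) 2
  calc tnorm τ (a - p) ≤ tnorm τ (2 • (a - a ^ 2)) := by
        refine tnorm_le_tnorm (S := M.toStarSubalgebra) hτpos (sub_mem haM hpM)
          (nsmul_mem (sub_mem haM (pow_mem haM 2)) 2) ?_
        rwa [hap.star_eq, hdefect.star_eq, ← sq, ← sq]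
    _ = 2 * tnorm τ (a - a ^ 2) := by
        rw [← ofNat_smul_eq_nsmul ℂ 2, tnorm_smul, Complex.norm_ofNat]

theorem stmt0_general (hτpos : ∀ x ∈ M, 0 ≤ τ (star x * x))
    (hτtr : ∀ x ∈ M, ∀ y ∈ M, τ (x * y) = τ (y * x)) {x : H →L[ℂ] H} (hx : x ∈ M) :
    ∃ p ∈ M, IsStarProjection p ∧
      tnorm τ (x - p) ≤ 2 * tnorm τ (x - x ^ 2) + (1 / 2 + ‖x‖) * tnorm τ (x - star x) := by
  set a : H →L[ℂ] H := (ℜ x : H →L[ℂ] H)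
  set b : H →L[ℂ] H := (ℑ x : H →L[ℂ] H)
  have haM : a ∈ M.toStarSubalgebra := realPart_mem hx
  have hbM : b ∈ M.toStarSubalgebra := imaginaryPart_mem hx
  obtain ⟨p, hpM, hp, hap⟩ := exists_isStarProjection_tnorm_sub_le hτpos haM (ℜ x).2
  refine ⟨p, hpM, hp, ?_⟩
  have hxp : x - p = (a - p) + Complex.I • b := by
    rw [sub_add_eq_add_sub, realPart_add_I_smul_imaginaryPart]
  calc tnorm τ (x - p) ≤ tnorm τ (a - p) + tnorm τ (Complex.I • b) :=
        hxp ▸ tnorm_add_le (S := M.toStarSubalgebra) hτpos (sub_mem haM hpM)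
          (M.toStarSubalgebra.smul_mem hbM _)
    _ = tnorm τ (a - p) + tnorm τ b := by rw [tnorm_smul, Complex.norm_I, one_mul]
    _ ≤ 2 * (tnorm τ (x - x ^ 2) + ‖x‖ * tnorm τ b) + tnorm τ b := by
        grw [hap, tnorm_realPart_sub_sq_le (S := M.toStarSubalgebra) hτpos hτtr hx]
    _ = 2 * tnorm τ (x - x ^ 2) + (1 / 2 + ‖x‖) * tnorm τ (x - star x) := by
        rw [tnorm_imaginaryPart]; ring

end TwoNorm

theorem stmt0 {H : Type*} [NormedAddCommGroup H] [InnerProductSpace ℂ H] [CompleteSpace H]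
    (M : VonNeumannAlgebra H) (τ : (H →L[ℂ] H) →ₗ[ℂ] ℂ)
    -- `τ` is a tracial state on `M`:
    (hτ1 : τ 1 = 1)
    (hτpos : ∀ x ∈ M, 0 ≤ τ (star x * x))
    (hτtr : ∀ x ∈ M, ∀ y ∈ M, τ (x * y) = τ (y * x))
    (ε δ : ℝ) (hε0 : 0 < ε) (hε1 : ε < 1) (hδ0 : 0 < δ) (hδ : δ < ε ^ 2 / 48)
    (x : H →L[ℂ] H) (hxM : x ∈ M) (hx : ‖x‖ ≤ 1)
    (h1 : tnorm τ (x - star x) ≤ δ) (h2 : tnorm τ (x - x ^ 2) ≤ δ) :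
    ∃ p ∈ M, star p = p ∧ p * p = p ∧ tnorm τ (x - p) < ε := by
  obtain ⟨p, hpM, hp, hle⟩ := stmt0_general hτpos hτtr hxM
  refine ⟨p, hpM, hp.isSelfAdjoint, hp.isIdempotentElem, ?_⟩
  calc tnorm τ (x - p) ≤ 2 * δ + (1 / 2 + 1) * δ := by grw [hle, h1, h2, hx]
    _ < ε := by nlinarith
end

section
/- Assume that any two projections e, f ∈ M with τ(e) = τ(f) are Murray–von Neumann equivalent in M (there is w ∈ M with w*w = e and ww* = f); this holds in every II₁ factor with its trace. Let p, q ∈ M be projections such that p ∼ q, i.e. there is a partial isometry in M implementing their equivalence. Let 0 < ε < 1 and 0 < δ < ε¹⁶/11¹⁶ be real numbers. Then for any x ∈ M with ‖x‖ ≤ 1, ‖x*x − p‖₂ ≤ δ, and ‖xx* − q‖₂ ≤ δ, there exists v ∈ M with v*v = p, vv* = q, and ‖x − v‖₂ < ε. -/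
/-!
Compress `x` to the corner `y = q x p` and take the polar decomposition `y = u|y|` in `M`. Then
`u*u ≤ p` and `uu* ≤ q` have the same trace, hence so do `p - u*u` and `q - uu*`, and adding to `u`
a partial isometry between these complements gives `v` with `v*v = p`, `vv* = q` and `v*y = |y|`.

The choice of `v` makes the cross term positive: `τ(v*x) = τ(v*y) = τ(|y|) ≥ τ(|y|²) = ‖y‖₂²`, as
`0 ≤ |y| ≤ 1`. Hence `‖x - v‖₂² ≤ ‖x‖₂² + τ(p) - 2‖y‖₂²`, and Cauchy-Schwarz in the form
`|τ(ea)| ≤ ‖a‖₂` for projections `e` bounds `‖x‖₂²` above by `τ(p) + δ` and `‖y‖₂²` below by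
`τ(p) - 2δ`, so that `‖x - v‖₂² ≤ 5δ`.
-/

open scoped ComplexOrder

section Subalgebra

variable {A S : Type*} [CStarAlgebra A] [PartialOrder A] [StarOrderedRing A] [SetLike S A]
  [SubringClass S A] [SMulMemClass S ℂ A] [StarMemClass S A]

theorem sqrt_mem_of_isClosed {s : S} [IsClosed (s : Set A)] {a : A} (ha : a ∈ s) (ha0 : 0 ≤ a) :
    CFC.sqrt a ∈ s := by
  rw [CFC.sqrt_eq_real_sqrt a, cfcₙ_eq_cfc]
  exact cfc_mem (𝕜' := ℂ) Real.sqrt ha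

instance starOrderedRing_of_isClosed (s : S) [IsClosed (s : Set A)] : StarOrderedRing s :=
  .of_nonneg_iff' (fun h c ↦ add_le_add_right (α := A) h c) fun a ↦ by
    refine ⟨fun ha ↦ ⟨⟨CFC.sqrt a, sqrt_mem_of_isClosed a.2 ha⟩, Subtype.ext ?_⟩, ?_⟩
    · have hs : star (CFC.sqrt (a : A)) = CFC.sqrt (a : A) :=
        (CFC.sqrt_nonneg (a : A)).isSelfAdjoint
      change (a : A) = star (CFC.sqrt (a : A)) * CFC.sqrt (a : A)
      rw [hs, CFC.sqrt_mul_sqrt_self (a : A) ha]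
    · rintro ⟨b, rfl⟩
      exact star_mul_self_nonneg (b : A)

end Subalgebra

section PartialIsometry

theorem star_mul_self_mul_eq_zero_iff {A : Type*} [NonUnitalNormedRing A] [StarRing A]
    [CStarRing A] (a b : A) : star a * a * b = 0 ↔ a * b = 0 := by
  refine ⟨fun h ↦ ?_, fun h ↦ by rw [mul_assoc, h, mul_zero]⟩
  rw [← CStarRing.star_mul_self_eq_zero_iff, star_mul, mul_assoc, ← mul_assoc (star a), h, mul_zero]

variable {A : Type*} [NormedRing A] [StarRing A] [CStarRing A] {u w p q : A}

theorem mul_star_mul_self_of_isStarProjection (h : IsStarProjection (star u * u)) :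
    u * (star u * u) = u := by
  have h0 : u * (1 - star u * u) = 0 :=
    (star_mul_self_mul_eq_zero_iff _ _).1 h.mul_one_sub_self
  rwa [mul_sub, mul_one, sub_eq_zero, eq_comm] at h0

theorem isStarProjection_mul_star_self (h : IsStarProjection (star u * u)) :
    IsStarProjection (u * star u) where
  isIdempotentElem := by
    rw [IsIdempotentElem, ← mul_assoc, mul_assoc u, mul_star_mul_self_of_isStarProjection h]
  isSelfAdjoint := .mul_star_self u

theorem star_mul_self_and_mul_star_self_add_of_complement (hu : IsStarProjection (star u * u))
    (hup : u * p = u) (hqu : q * u = u) (hwp : star w * w = p - star u * u)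
    (hwq : w * star w = q - u * star u) :
    star (u + w) * (u + w) = p ∧ (u + w) * star (u + w) = q := by
  have huu := mul_star_mul_self_of_isStarProjection hu
  have hwu : star w * u = 0 := by
    rw [← star_mul_self_mul_eq_zero_iff, star_star, hwq, sub_mul, hqu, mul_assoc, huu, sub_self]
  have huw : u * star w = 0 := by
    rw [← star_eq_zero, star_mul, star_star, ← star_mul_self_mul_eq_zero_iff, ← star_eq_zero,
      star_mul, star_star, star_mul, star_star, hwp, mul_sub, hup, huu, sub_self]
  have huw' : star u * w = 0 := by simpa using congr(star $hwu)
  have hwu' : w * star u = 0 := by simpa using congr(star $huw)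
  constructor
  · rw [star_add, add_mul, mul_add, mul_add, huw', hwu, hwp]
    abel
  · rw [star_add, add_mul, mul_add, mul_add, huw, hwu', hwq]
    abel

end PartialIsometry

theorem exists_comp_eq_of_norm_le {𝕜 E F G : Type*} [RCLike 𝕜] [NormedAddCommGroup E]
    [NormedSpace 𝕜 E] [NormedAddCommGroup F] [NormedSpace 𝕜 F] [CompleteSpace F]
    [NormedAddCommGroup G] [InnerProductSpace 𝕜 G] [CompleteSpace G]
    (y : E →L[𝕜] F) (T : E →L[𝕜] G) {C : ℝ} (h : ∀ ξ, ‖y ξ‖ ≤ C * ‖T ξ‖) :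
    ∃ u : G →L[𝕜] F, u ∘L T = y := by
  let K := T.range.topologicalClosure
  let T' : E →ₗ[𝕜] K := T.toLinearMap.codRestrict K fun ξ ↦
    Submodule.le_topologicalClosure _ ⟨ξ, rfl⟩
  have hdense : DenseRange T' := by
    intro k
    rw [closure_subtype, ← Set.range_comp]
    exact k.2
  refine ⟨y.toLinearMap.extendOfNorm T' ∘L K.orthogonalProjectionOnto, ?_⟩
  ext ξ
  have hproj : K.orthogonalProjectionOnto (T ξ) = T' ξ :=
    Submodule.orthogonalProjectionOnto_mem_subspace_eq_self (T' ξ)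
  simpa [hproj] using LinearMap.extendOfNorm_eq hdense ⟨C, h⟩ ξ

section LeftSupport

variable {𝕜 H : Type*} [RCLike 𝕜] [NormedAddCommGroup H] [InnerProductSpace 𝕜 H] [CompleteSpace H]

/-- The left support of an operator `T`: the orthogonal projection onto the closure of its range. It
is the initial projection `u*u` in a factorization `y = uT` with `T = |y|`. -/
noncomputable def leftSupport (T : H →L[𝕜] H) : H →L[𝕜] H :=
  T.range.topologicalClosure.starProjection

variable (T : H →L[𝕜] H)

theorem isStarProjection_leftSupport : IsStarProjection (leftSupport T) :=
  isStarProjection_starProjection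

theorem leftSupport_mul_self : leftSupport T * T = T := by
  ext ξ
  exact Submodule.starProjection_eq_self_iff.2 (Submodule.le_topologicalClosure _ ⟨ξ, rfl⟩)

variable {T}

theorem mul_leftSupport_eq_zero_iff {a : H →L[𝕜] H} : a * leftSupport T = 0 ↔ a * T = 0 := by
  refine ⟨fun h ↦ by rw [← leftSupport_mul_self T, ← mul_assoc, h, zero_mul], fun h ↦ ?_⟩
  have hker : T.range.topologicalClosure ≤ a.ker := by
    refine Submodule.topologicalClosure_minimal _ ?_ a.isClosed_ker
    rintro _ ⟨ξ, rfl⟩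
    exact congr($h ξ)
  ext ξ
  exact hker (Submodule.starProjection_apply_mem _ ξ)

theorem leftSupport_mul_eq_zero_iff {a : H →L[𝕜] H} : leftSupport T * a = 0 ↔ star T * a = 0 := by
  rw [← star_eq_zero, star_mul, (isStarProjection_leftSupport T).isSelfAdjoint.star_eq,
    mul_leftSupport_eq_zero_iff, ← star_eq_zero, star_mul, star_star]

theorem norm_apply_eq_of_star_mul_self_eq {y : H →L[𝕜] H} (h : star y * y = star T * T) (ξ : H) :
    ‖y ξ‖ = ‖T ξ‖ := by
  rw [← sq_eq_sq₀ (norm_nonneg _) (norm_nonneg _),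
    ContinuousLinearMap.apply_norm_sq_eq_inner_adjoint_left,
    ContinuousLinearMap.apply_norm_sq_eq_inner_adjoint_left]
  exact congr(RCLike.re (inner 𝕜 ($h ξ) ξ))

theorem mul_leftSupport_of_star_mul_self_eq {u : H →L[𝕜] H} (hu : star u * u = leftSupport T) :
    u * leftSupport T = u := by
  have h : IsStarProjection (star u * u) := hu ▸ isStarProjection_leftSupport T
  rw [← hu, mul_star_mul_self_of_isStarProjection h]

theorem exists_mul_eq_and_star_mul_self_eq_leftSupport {y : H →L[𝕜] H}
    (h : star y * y = star T * T) : ∃ u, u * T = y ∧ star u * u = leftSupport T := by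
  obtain ⟨u, hu⟩ := exists_comp_eq_of_norm_le y T (C := 1) fun ξ ↦ by
    rw [one_mul, norm_apply_eq_of_star_mul_self_eq h]
  have hP := isStarProjection_leftSupport T
  refine ⟨u * leftSupport T, by rwa [mul_assoc, leftSupport_mul_self], ?_⟩
  have huT : star T * ((star u * u - 1) * T) = 0 := by
    rw [sub_mul, mul_sub, one_mul, ← h, ← hu]
    simp only [← ContinuousLinearMap.mul_def, star_mul, mul_assoc, sub_self]
  have huP : leftSupport T * (star u * u - 1) * leftSupport T = 0 := by
    rwa [mul_leftSupport_eq_zero_iff, mul_assoc, leftSupport_mul_eq_zero_iff]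
  rw [mul_sub, sub_mul, mul_one, hP.isIdempotentElem.eq, sub_eq_zero] at huP
  rw [star_mul, hP.isSelfAdjoint.star_eq]
  simpa only [mul_assoc] using huP

end LeftSupport

section VonNeumann

variable {H : Type*} [NormedAddCommGroup H] [InnerProductSpace ℂ H] [CompleteSpace H]

instance smulMemClass_vonNeumannAlgebra : SMulMemClass (VonNeumannAlgebra H) ℂ (H →L[ℂ] H) where
  smul_mem {M} c _ hx := M.toStarSubalgebra.smul_mem hx c

instance isClosed_vonNeumannAlgebra (M : VonNeumannAlgebra H) :
    IsClosed (M : Set (H →L[ℂ] H)) :=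
  M.centralizer_centralizer ▸ Set.isClosed_centralizer _

/-- The restriction to the von Neumann algebra `M` of a functional `τ` that is positive on `M`. It
lets `M` be treated as an abstract C⋆-algebra, the 2-norm of `τ` being the norm of `PreGNS`. -/
noncomputable def restrictPositive (M : VonNeumannAlgebra H) (τ : (H →L[ℂ] H) →ₗ[ℂ] ℂ)
    (hτpos : ∀ x ∈ M, 0 ≤ τ (star x * x)) : M →ₚ[ℂ] ℂ :=
  .mk₀ (τ ∘ₗ M.toStarSubalgebra.toSubmodule.subtype) fun a ha ↦ by
    obtain ⟨b, rfl⟩ := CStarAlgebra.nonneg_iff_eq_star_mul_self.1 ha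
    exact hτpos b b.2

variable {M : VonNeumannAlgebra H}

theorem leftSupport_mem {T : H →L[ℂ] H} (hT : T ∈ M) :
    leftSupport T ∈ M := by
  rw [VonNeumannAlgebra.IsStarProjection.mem_iff (isStarProjection_leftSupport T)]
  intro a ha
  rw [ContinuousLinearMap.IsIdempotentElem.range_mem_invtSubmodule_iff
    (isStarProjection_leftSupport T).isIdempotentElem]
  have hTa : T * a = a * T := VonNeumannAlgebra.mem_commutant_iff.1 ha T hT
  have h0 : (a - leftSupport T * a) * leftSupport T = 0 := by
    rw [mul_leftSupport_eq_zero_iff, sub_mul, mul_assoc, ← hTa, ← mul_assoc, leftSupport_mul_self,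
      sub_self]
  rw [sub_mul, sub_eq_zero, mul_assoc] at h0
  exact h0.symm

theorem mem_of_mul_mem_of_star_mul_self_eq_leftSupport {u T : H →L[ℂ] H} (hT : T ∈ M)
    (huT : u * T ∈ M) (hu : star u * u = leftSupport T) : u ∈ M := by
  rw [← M.commutant_commutant, VonNeumannAlgebra.mem_commutant_iff]
  intro a ha
  rw [VonNeumannAlgebra.mem_commutant_iff] at ha
  have hP := mul_leftSupport_of_star_mul_self_eq hu
  have h0 : (a * u - u * a) * leftSupport T = 0 := by
    rw [mul_leftSupport_eq_zero_iff, sub_mul, mul_assoc, ← ha _ huT, mul_assoc, ha T hT, mul_assoc,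
      sub_self]
  rwa [sub_mul, mul_assoc, hP, mul_assoc, ← ha _ (leftSupport_mem hT), ← mul_assoc, hP,
    sub_eq_zero] at h0

theorem exists_polar_decomposition (y : M) :
    ∃ u : M, u * CFC.abs y = y ∧ IsStarProjection (star u * u) ∧ star u * y = CFC.abs y ∧
      (∀ a, a * y = 0 → a * u = 0) ∧ ∀ a, y * a = 0 → u * a = 0 := by
  obtain ⟨T, hT⟩ : ∃ T, T = CFC.abs y := ⟨_, rfl⟩
  have hTs : star T = T := hT ▸ (CFC.abs_nonneg y).isSelfAdjoint
  have hTT : star y * y = star T * T := by rw [hTs, hT, CFC.abs_mul_abs]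
  obtain ⟨u, huT, hu⟩ := exists_mul_eq_and_star_mul_self_eq_leftSupport (T := (T : H →L[ℂ] H))
    congr(($hTT : H →L[ℂ] H))
  have huM : u ∈ M := mem_of_mul_mem_of_star_mul_self_eq_leftSupport T.2 (huT ▸ y.2) hu
  have hP := isStarProjection_leftSupport (T : H →L[ℂ] H)
  have huP := mul_leftSupport_of_star_mul_self_eq hu
  rw [← hT]
  refine ⟨⟨u, huM⟩, Subtype.ext huT, ?_, Subtype.ext ?_, fun a ha ↦ Subtype.ext ?_,
    fun a ha ↦ Subtype.ext ?_⟩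
  · exact ⟨Subtype.ext (hu ▸ hP).1, Subtype.ext (hu ▸ hP).2⟩
  · change star u * (y : H →L[ℂ] H) = T
    rw [← huT, ← mul_assoc, hu, leftSupport_mul_self]
  · change (a : H →L[ℂ] H) * u = 0
    rw [← huP, ← mul_assoc, mul_leftSupport_eq_zero_iff, mul_assoc, huT]
    exact congr(($ha : H →L[ℂ] H))
  · have hTa : star T * a = 0 := by
      rw [hTs, ← star_mul_self_mul_eq_zero_iff, ← hTT, mul_assoc, ha, mul_zero]
    change u * (a : H →L[ℂ] H) = 0
    rw [← huP, mul_assoc, leftSupport_mul_eq_zero_iff.2, mul_zero]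
    exact congr(($hTa : H →L[ℂ] H))

theorem exists_partialIsometry_extending_polar {F G : Type*} [AddGroup G] [FunLike F M G]
    [AddMonoidHomClass F M G] {τ : F} (htr : ∀ a b, τ (a * b) = τ (b * a))
    (hequiv : ∀ e f : M, IsStarProjection e → IsStarProjection f → τ e = τ f →
      ∃ w, star w * w = e ∧ w * star w = f)
    {p q y : M} (hp : IsStarProjection p) (hq : IsStarProjection q) (hpq : τ p = τ q)
    (hyp : y * p = y) (hqy : q * y = y) :
    ∃ v, star v * v = p ∧ v * star v = q ∧ star v * y = CFC.abs y := by
  obtain ⟨u, huy, hu, hyu, hleft, hright⟩ := exists_polar_decomposition y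
  have hup : u * p = u := by
    have h := hright (1 - p) (by rw [mul_one_sub, hyp, sub_self])
    rwa [mul_one_sub, sub_eq_zero, eq_comm] at h
  have hqu : q * u = u := by
    have h := hleft (1 - q) (by rw [one_sub_mul, hqy, sub_self])
    rwa [one_sub_mul, sub_eq_zero, eq_comm] at h
  obtain ⟨w, hwp, hwq⟩ := hequiv (p - star u * u) (q - u * star u)
    (hu.sub_of_mul_eq_left hp (by rw [mul_assoc, hup]))
    ((isStarProjection_mul_star_self hu).sub_of_mul_eq_right hq (by rw [← mul_assoc, hqu]))
    (by rw [map_sub, map_sub, hpq, htr])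
  obtain ⟨hp', hq'⟩ := star_mul_self_and_mul_star_self_add_of_complement hu hup hqu hwp hwq
  refine ⟨u + w, hp', hq', ?_⟩
  have hwy : star w * y = 0 := by
    rw [← star_mul_self_mul_eq_zero_iff, star_star, hwq, sub_mul, hqy, mul_assoc, hyu, huy,
      sub_self]
  rw [star_add, add_mul, hyu, hwy, add_zero]

end VonNeumann

section Trace

open PositiveLinearMap

variable {A : Type*} [CStarAlgebra A] [PartialOrder A] [StarOrderedRing A] {τ : A →ₚ[ℂ] ℂ}

theorem norm_toPreGNS_sq (a : A) : ‖τ.toPreGNS a‖ ^ 2 = (τ (star a * a)).re := by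
  simpa [← Complex.ofReal_pow] using congr(Complex.re $(τ.preGNS_norm_sq (τ.toPreGNS a)))

theorem norm_toPreGNS_le_one_of_isStarProjection (hτ1 : τ 1 = 1) {e : A}
    (he : IsStarProjection e) : ‖τ.toPreGNS e‖ ≤ 1 := by
  rw [← sq_le_one_iff₀ (norm_nonneg _), norm_toPreGNS_sq, he.isSelfAdjoint.star_eq,
    he.isIdempotentElem.eq]
  simpa [hτ1] using (Complex.le_def.1 (OrderHomClass.mono τ he.le_one)).1

theorem norm_map_mul_le_of_isStarProjection (hτ1 : τ 1 = 1) {e : A} (he : IsStarProjection e)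
    (a : A) : ‖τ (e * a)‖ ≤ ‖τ.toPreGNS a‖ := by
  calc ‖τ (e * a)‖ = ‖inner ℂ (τ.toPreGNS e) (τ.toPreGNS a)‖ := by
        rw [preGNS_inner_def, ofPreGNS_toPreGNS, ofPreGNS_toPreGNS, he.isSelfAdjoint.star_eq]
    _ ≤ ‖τ.toPreGNS e‖ * ‖τ.toPreGNS a‖ := norm_inner_le_norm _ _
    _ ≤ ‖τ.toPreGNS a‖ := mul_le_of_le_one_left (norm_nonneg _)
        (norm_toPreGNS_le_one_of_isStarProjection hτ1 he)

theorem norm_toPreGNS_star (htr : ∀ a b, τ (a * b) = τ (b * a)) (a : A) :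
    ‖τ.toPreGNS (star a)‖ = ‖τ.toPreGNS a‖ := by
  rw [← sq_eq_sq₀ (norm_nonneg _) (norm_nonneg _), norm_toPreGNS_sq, norm_toPreGNS_sq, star_star,
    htr]

theorem abs_norm_toPreGNS_mul_sq_sub_le (hτ1 : τ 1 = 1) (htr : ∀ a b, τ (a * b) = τ (b * a))
    {e : A} (he : IsStarProjection e) (x a : A) :
    |‖τ.toPreGNS (x * e)‖ ^ 2 - (τ (e * a)).re| ≤ ‖τ.toPreGNS (star x * x - a)‖ := by
  have hxe : τ (star (x * e) * (x * e)) = τ (e * (star x * x)) := by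
    rw [star_mul, he.isSelfAdjoint.star_eq, ← mul_assoc, htr, mul_assoc, ← mul_assoc,
      ← mul_assoc, he.isIdempotentElem.eq, mul_assoc]
  calc |‖τ.toPreGNS (x * e)‖ ^ 2 - (τ (e * a)).re| = |(τ (e * (star x * x - a))).re| := by
        rw [norm_toPreGNS_sq, hxe, mul_sub, map_sub, Complex.sub_re]
    _ ≤ ‖τ (e * (star x * x - a))‖ := Complex.abs_re_le_norm _
    _ ≤ ‖τ.toPreGNS (star x * x - a)‖ := norm_map_mul_le_of_isStarProjection hτ1 he _

theorem norm_toPreGNS_sq_eq_add {e : A} (he : IsStarProjection e) (x : A) :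
    ‖τ.toPreGNS x‖ ^ 2 = ‖τ.toPreGNS (e * x)‖ ^ 2 + ‖τ.toPreGNS ((1 - e) * x)‖ ^ 2 := by
  have hsq {f : A} (hf : IsStarProjection f) : star (f * x) * (f * x) = star x * f * x := by
    rw [star_mul, hf.isSelfAdjoint.star_eq, mul_assoc, ← mul_assoc f, hf.isIdempotentElem.eq,
      mul_assoc]
  rw [norm_toPreGNS_sq, norm_toPreGNS_sq, norm_toPreGNS_sq, hsq he, hsq he.one_sub,
    ← Complex.add_re, ← map_add, ← add_mul, ← mul_add, add_sub_cancel, mul_one]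

theorem norm_toPreGNS_mul_le (htr : ∀ a b, τ (a * b) = τ (b * a)) {e : A}
    (he : IsStarProjection e) (x : A) : ‖τ.toPreGNS (x * e)‖ ≤ ‖τ.toPreGNS x‖ := by
  rw [← norm_toPreGNS_star htr, ← norm_toPreGNS_star htr x, star_mul, he.isSelfAdjoint.star_eq,
    ← sq_le_sq₀ (norm_nonneg _) (norm_nonneg _), norm_toPreGNS_sq_eq_add he (star x)]
  exact le_add_of_nonneg_right (sq_nonneg _)

theorem norm_toPreGNS_sq_le_map_abs {y : A} (hy : ‖y‖ ≤ 1) :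
    ‖τ.toPreGNS y‖ ^ 2 ≤ (τ (CFC.abs y)).re := by
  have habs1 : CFC.abs y ≤ 1 := by
    rwa [← CStarAlgebra.norm_le_one_iff_of_nonneg _ (CFC.abs_nonneg y), CFC.norm_abs]
  have hsq : star y * y ≤ CFC.abs y := by
    simpa [CFC.abs_sq] using
      CStarAlgebra.pow_antitone (CFC.abs_nonneg y) habs1 (show 1 ≤ 2 from one_le_two)
  rw [norm_toPreGNS_sq]
  exact (Complex.le_def.1 (OrderHomClass.mono τ hsq)).1

variable {p q x v : A} {δ : ℝ}

theorem sub_two_mul_le_norm_toPreGNS_compression_sq (hτ1 : τ 1 = 1)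
    (htr : ∀ a b, τ (a * b) = τ (b * a)) (hp : IsStarProjection p) (hq : IsStarProjection q)
    (hxp : ‖τ.toPreGNS (star x * x - p)‖ ≤ δ) (hxq : ‖τ.toPreGNS (x * star x - q)‖ ≤ δ) :
    (τ p).re - 2 * δ ≤ ‖τ.toPreGNS (q * x * p)‖ ^ 2 := by
  have hright : (τ p).re - δ ≤ ‖τ.toPreGNS (x * p)‖ ^ 2 := by
    have h := (abs_norm_toPreGNS_mul_sq_sub_le hτ1 htr hp x p).trans hxp
    rw [hp.isIdempotentElem.eq] at h
    linarith [abs_le.1 h]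
  have hleft : ‖τ.toPreGNS ((1 - q) * x)‖ ^ 2 ≤ δ := by
    have h := (abs_norm_toPreGNS_mul_sq_sub_le hτ1 htr hq.one_sub (star x) q).trans
      (by rwa [star_star] : _ ≤ δ)
    rw [hq.one_sub_mul_self, map_zero, Complex.zero_re, sub_zero] at h
    rw [← norm_toPreGNS_star htr, star_mul, hq.one_sub.isSelfAdjoint.star_eq]
    exact (le_abs_self _).trans h
  have hcorner : ‖τ.toPreGNS ((1 - q) * (x * p))‖ ^ 2 ≤ ‖τ.toPreGNS ((1 - q) * x)‖ ^ 2 := by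
    rw [← mul_assoc]
    gcongr
    exact norm_toPreGNS_mul_le htr hp _
  have hpyth := norm_toPreGNS_sq_eq_add (τ := τ) hq (x * p)
  rw [← mul_assoc q] at hpyth
  linarith

theorem norm_toPreGNS_sub_sq_le_five_mul (hτ1 : τ 1 = 1) (htr : ∀ a b, τ (a * b) = τ (b * a))
    (hp : IsStarProjection p) (hq : IsStarProjection q) (hx : ‖x‖ ≤ 1)
    (hxp : ‖τ.toPreGNS (star x * x - p)‖ ≤ δ) (hxq : ‖τ.toPreGNS (x * star x - q)‖ ≤ δ)
    (hvp : star v * v = p) (hvq : v * star v = q)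
    (hv : star v * (q * x * p) = CFC.abs (q * x * p)) :
    ‖τ.toPreGNS (x - v)‖ ^ 2 ≤ 5 * δ := by
  have hvv : v * p = v := hvp ▸ mul_star_mul_self_of_isStarProjection (hvp ▸ hp)
  have hpv : p * star v = star v := by
    simpa [hp.isSelfAdjoint.star_eq] using congr(star $hvv)
  have hvq' : star v * q = star v := by rw [← hvq, ← mul_assoc, hvp, hpv]
  have hinner : τ (star v * x) = τ (CFC.abs (q * x * p)) := by
    rw [← hv, mul_assoc q, ← mul_assoc, hvq', ← mul_assoc, htr (star v * x), ← mul_assoc, hpv]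
  have hnorm_x : ‖τ.toPreGNS x‖ ^ 2 ≤ (τ p).re + δ := by
    have h := (abs_norm_toPreGNS_mul_sq_sub_le hτ1 htr (.one A) x p).trans hxp
    rw [mul_one, one_mul] at h
    linarith [abs_le.1 h]
  have hnorm_v : ‖τ.toPreGNS v‖ ^ 2 = (τ p).re := by rw [norm_toPreGNS_sq, hvp]
  have hy : ‖q * x * p‖ ≤ 1 := by
    calc ‖q * x * p‖ ≤ ‖q‖ * ‖x‖ * ‖p‖ := norm_mul₃_le
      _ ≤ 1 * 1 * 1 := by gcongr <;> apply IsStarProjection.norm_le <;> assumption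
      _ = 1 := by norm_num
  have habs := norm_toPreGNS_sq_le_map_abs (τ := τ) hy
  have hcompr := sub_two_mul_le_norm_toPreGNS_compression_sq hτ1 htr hp hq hxp hxq
  rw [map_sub, ← norm_neg, neg_sub, norm_sub_sq (𝕜 := ℂ), preGNS_inner_def, ofPreGNS_toPreGNS,
    ofPreGNS_toPreGNS, hinner, RCLike.re_eq_complex_re]
  linarith

end Trace

theorem five_mul_lt_sq_of_lt_pow_div {ε δ : ℝ} (hε0 : 0 < ε) (hε1 : ε < 1)
    (hδ : δ < ε ^ 16 / 11 ^ 16) : 5 * δ < ε ^ 2 := by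
  have h : ε ^ 16 ≤ ε ^ 2 := pow_le_pow_of_le_one hε0.le hε1.le (by norm_num)
  have h2 : 0 < ε ^ 2 := by positivity
  rw [lt_div_iff₀ (by positivity)] at hδ
  linarith

theorem stmt2_general {H : Type*} [NormedAddCommGroup H] [InnerProductSpace ℂ H] [CompleteSpace H]
    (M : VonNeumannAlgebra H) (τ : (H →L[ℂ] H) →ₗ[ℂ] ℂ)
    (hτ1 : τ 1 = 1)
    (hτpos : ∀ x ∈ M, 0 ≤ τ (star x * x))
    (hτtr : ∀ x ∈ M, ∀ y ∈ M, τ (x * y) = τ (y * x))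
    (hequiv : ∀ e ∈ M, ∀ f ∈ M, star e = e → e * e = e → star f = f → f * f = f →
      τ e = τ f → ∃ w ∈ M, star w * w = e ∧ w * star w = f)
    (p q : H →L[ℂ] H) (hpM : p ∈ M) (hqM : q ∈ M)
    (hp1 : star p = p) (hp2 : p * p = p) (hq1 : star q = q) (hq2 : q * q = q)
    (hpq : ∃ v ∈ M, star v * v = p ∧ v * star v = q)
    (δ : ℝ) (x : H →L[ℂ] H) (hxM : x ∈ M) (hx : ‖x‖ ≤ 1)
    (h1 : tnorm τ (star x * x - p) ≤ δ) (h2 : tnorm τ (x * star x - q) ≤ δ) :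
    ∃ v ∈ M, star v * v = p ∧ v * star v = q ∧ tnorm τ (x - v) ^ 2 ≤ 5 * δ := by
  let σ := restrictPositive M τ hτpos
  have hσtr (a b : M) : σ (a * b) = σ (b * a) := hτtr a a.2 b b.2
  have hσequiv (e f : M) (he : IsStarProjection e) (hf : IsStarProjection f) (hef : σ e = σ f) :
      ∃ w, star w * w = e ∧ w * star w = f := by
    obtain ⟨w, hwM, hwe, hwf⟩ := hequiv e e.2 f f.2
      congr(($(he.isSelfAdjoint.star_eq) : H →L[ℂ] H))
      congr(($(he.isIdempotentElem.eq) : H →L[ℂ] H))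
      congr(($(hf.isSelfAdjoint.star_eq) : H →L[ℂ] H))
      congr(($(hf.isIdempotentElem.eq) : H →L[ℂ] H)) hef
    exact ⟨⟨w, hwM⟩, Subtype.ext hwe, Subtype.ext hwf⟩
  lift p to M using hpM
  lift q to M using hqM
  lift x to M using hxM
  have hp : IsStarProjection p := ⟨Subtype.ext hp2, Subtype.ext hp1⟩
  have hq : IsStarProjection q := ⟨Subtype.ext hq2, Subtype.ext hq1⟩
  have hσpq : σ p = σ q := by
    obtain ⟨v, hvM, hvp, hvq⟩ := hpq
    calc τ p = τ (star v * v) := by rw [hvp]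
      _ = τ q := by rw [hτtr _ (star_mem hvM) v hvM, hvq]
  obtain ⟨v, hvp, hvq, hv⟩ := exists_partialIsometry_extending_polar hσtr hσequiv hp hq hσpq
    (y := q * x * p) (by rw [mul_assoc, hp.isIdempotentElem.eq])
    (by rw [mul_assoc, ← mul_assoc, hq.isIdempotentElem.eq])
  exact ⟨v, v.2, congr(($hvp : H →L[ℂ] H)), congr(($hvq : H →L[ℂ] H)),
    norm_toPreGNS_sub_sq_le_five_mul hτ1 hσtr hp hq hx h1 h2 hvp hvq hv⟩

theorem stmt2 {H : Type*} [NormedAddCommGroup H] [InnerProductSpace ℂ H] [CompleteSpace H]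
    (M : VonNeumannAlgebra H) (τ : (H →L[ℂ] H) →ₗ[ℂ] ℂ)
    -- `τ` is a tracial state on `M`:
    (hτ1 : τ 1 = 1)
    (hτpos : ∀ x ∈ M, 0 ≤ τ (star x * x))
    (hτtr : ∀ x ∈ M, ∀ y ∈ M, τ (x * y) = τ (y * x))
    -- any two projections in `M` with the same trace are Murray-von Neumann equivalent:
    (hequiv : ∀ e ∈ M, ∀ f ∈ M, star e = e → e * e = e → star f = f → f * f = f →
      τ e = τ f → ∃ w ∈ M, star w * w = e ∧ w * star w = f)
    -- `p` and `q` are Murray-von Neumann equivalent projections in `M`: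
    (p q : H →L[ℂ] H) (hpM : p ∈ M) (hqM : q ∈ M)
    (hp1 : star p = p) (hp2 : p * p = p) (hq1 : star q = q) (hq2 : q * q = q)
    (hpq : ∃ v ∈ M, star v * v = p ∧ v * star v = q)
    (ε δ : ℝ) (hε0 : 0 < ε) (hε1 : ε < 1) (hδ0 : 0 < δ) (hδ : δ < ε ^ 16 / 11 ^ 16)
    (x : H →L[ℂ] H) (hxM : x ∈ M) (hx : ‖x‖ ≤ 1)
    (h1 : tnorm τ (star x * x - p) ≤ δ) (h2 : tnorm τ (x * star x - q) ≤ δ) :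
    ∃ v ∈ M, star v * v = p ∧ v * star v = q ∧ tnorm τ (x - v) < ε := by
  obtain ⟨v, hvM, hvp, hvq, hv⟩ :=
    stmt2_general M τ hτ1 hτpos hτtr hequiv p q hpM hqM hp1 hp2 hq1 hq2 hpq δ x hxM hx h1 h2
  exact ⟨v, hvM, hvp, hvq, lt_of_pow_lt_pow_left₀ 2 hε0.le
    (hv.trans_lt (five_mul_lt_sq_of_lt_pow_div hε0 hε1 hδ))⟩
end

section
/- Let A be a unital complex *-algebra, let M ⊆ A be a unital *-subalgebra, let e ∈ A satisfy e = e* and e² = e, and let E : M → M be a linear map such that e x e = E(x) e for all x ∈ M. Then the set M + span{ x e y : x, y ∈ M } is a unital *-subalgebra of A containing M and e; consequently it equals the *-subalgebra of A generated by M ∪ {e}. -/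
/-!
Write `MeM` for the span of the products `x * e * y` with `x, y ∈ M`. As submodules of `A`,
`M · M = M` and `M · MeM = MeM = MeM · M`, while `MeM · MeM = M (eMe) M`. So `M + MeM` is closed
under multiplication as soon as `eMe ⊆ M + MeM`, and it is then the subalgebra generated by
`M ∪ {e}`. Since this generating set is stable under `star`, so is that subalgebra.
-/

open Pointwise

section Subalgebra

open Submodule Subalgebra

variable {R A : Type*} [CommSemiring R] [Semiring A] [Algebra R A] {M : Subalgebra R A} {e : A}

/-- The `M`-sub-bimodule `MeM` of `A` generated by `e`, as a product of `R`-submodules, so that the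
semiring structure on `Submodule R A` is available to compute with it. -/
def bimoduleSpan (M : Subalgebra R A) (e : A) : Submodule R A :=
  toSubmodule M * span R {e} * toSubmodule M

theorem bimoduleSpan_eq_span (M : Subalgebra R A) (e : A) :
    bimoduleSpan M e = span R {z : A | ∃ x ∈ M, ∃ y ∈ M, z = x * e * y} := by
  rw [bimoduleSpan, ← span_eq (toSubmodule M), span_mul_span, span_mul_span]
  congr 1
  ext z
  simp [Set.mem_mul, eq_comm]

theorem mem_bimoduleSpan_self (M : Subalgebra R A) (e : A) : e ∈ bimoduleSpan M e := by
  rw [bimoduleSpan_eq_span]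
  exact subset_span ⟨1, one_mem M, 1, one_mem M, by rw [one_mul, mul_one]⟩

theorem toSubmodule_mul_bimoduleSpan (M : Subalgebra R A) (e : A) :
    toSubmodule M * bimoduleSpan M e = bimoduleSpan M e := by
  simp only [bimoduleSpan, ← mul_assoc, (isIdempotentElem_toSubmodule M).eq]

theorem bimoduleSpan_mul_toSubmodule (M : Subalgebra R A) (e : A) :
    bimoduleSpan M e * toSubmodule M = bimoduleSpan M e := by
  simp only [bimoduleSpan, mul_assoc, (isIdempotentElem_toSubmodule M).eq]

theorem bimoduleSpan_mul_self (M : Subalgebra R A) (e : A) :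
    bimoduleSpan M e * bimoduleSpan M e =
      toSubmodule M * (span R {e} * toSubmodule M * span R {e}) * toSubmodule M :=
  calc bimoduleSpan M e * bimoduleSpan M e
      = toSubmodule M * span R {e} * (toSubmodule M * bimoduleSpan M e) := by
        rw [bimoduleSpan, mul_assoc]
    _ = toSubmodule M * (span R {e} * toSubmodule M * span R {e}) * toSubmodule M := by
        rw [toSubmodule_mul_bimoduleSpan]
        simp only [bimoduleSpan, mul_assoc]

theorem span_singleton_mul_toSubmodule_mul_span_singleton_le {P : Submodule R A}
    (h : ∀ x ∈ M, e * x * e ∈ P) : span R {e} * toSubmodule M * span R {e} ≤ P := by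
  rw [← span_eq (toSubmodule M), span_mul_span, span_mul_span, span_le]
  rintro _ ⟨_, ⟨_, rfl, x, hx, rfl⟩, _, rfl, rfl⟩
  exact h x hx

theorem bimoduleSpan_mul_self_le (h : ∀ x ∈ M, e * x * e ∈ toSubmodule M ⊔ bimoduleSpan M e) :
    bimoduleSpan M e * bimoduleSpan M e ≤ toSubmodule M ⊔ bimoduleSpan M e :=
  calc bimoduleSpan M e * bimoduleSpan M e
      = toSubmodule M * (span R {e} * toSubmodule M * span R {e}) * toSubmodule M :=
        bimoduleSpan_mul_self M e
    _ ≤ toSubmodule M * (toSubmodule M ⊔ bimoduleSpan M e) * toSubmodule M := by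
        gcongr
        exact span_singleton_mul_toSubmodule_mul_span_singleton_le h
    _ = toSubmodule M ⊔ bimoduleSpan M e := by
        simp only [Submodule.mul_sup, Submodule.sup_mul, (isIdempotentElem_toSubmodule M).eq,
          toSubmodule_mul_bimoduleSpan, bimoduleSpan_mul_toSubmodule]

theorem sup_bimoduleSpan_mul_self_le
    (h : ∀ x ∈ M, e * x * e ∈ toSubmodule M ⊔ bimoduleSpan M e) :
    (toSubmodule M ⊔ bimoduleSpan M e) * (toSubmodule M ⊔ bimoduleSpan M e) ≤
      toSubmodule M ⊔ bimoduleSpan M e := by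
  simp only [Submodule.mul_sup, Submodule.sup_mul, (isIdempotentElem_toSubmodule M).eq,
    toSubmodule_mul_bimoduleSpan, bimoduleSpan_mul_toSubmodule]
  exact sup_le (sup_le le_sup_left le_sup_right) (sup_le le_sup_right (bimoduleSpan_mul_self_le h))

theorem sup_bimoduleSpan_le_adjoin (M : Subalgebra R A) (e : A) :
    toSubmodule M ⊔ bimoduleSpan M e ≤
      toSubmodule (Algebra.adjoin R ((M : Set A) ∪ {e})) := by
  have hM : ∀ x ∈ M, x ∈ Algebra.adjoin R ((M : Set A) ∪ {e}) := fun x hx ↦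
    Algebra.subset_adjoin (.inl hx)
  have he : e ∈ Algebra.adjoin R ((M : Set A) ∪ {e}) := Algebra.subset_adjoin (.inr rfl)
  have hMeM : {z : A | ∃ x ∈ M, ∃ y ∈ M, z = x * e * y} ⊆
      Algebra.adjoin R ((M : Set A) ∪ {e}) := by
    rintro _ ⟨x, hx, y, hy, rfl⟩
    exact mul_mem (mul_mem (hM x hx) he) (hM y hy)
  rw [bimoduleSpan_eq_span]
  exact sup_le hM (span_le.2 hMeM)

theorem toSubmodule_adjoin_union_singleton
    (h : ∀ x ∈ M, e * x * e ∈ toSubmodule M ⊔ bimoduleSpan M e) :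
    toSubmodule (Algebra.adjoin R ((M : Set A) ∪ {e})) = toSubmodule M ⊔ bimoduleSpan M e := by
  refine le_antisymm ?_ (sup_bimoduleSpan_le_adjoin M e)
  let T : Subalgebra R A := (toSubmodule M ⊔ bimoduleSpan M e).toSubalgebra
    (mem_sup_left (one_mem M))
    fun _ _ hx hy ↦ sup_bimoduleSpan_mul_self_le h (mul_mem_mul hx hy)
  have hT : Algebra.adjoin R ((M : Set A) ∪ {e}) ≤ T :=
    Algebra.adjoin_le (Set.union_subset (fun _ hx ↦ mem_sup_left hx)
      (Set.singleton_subset_iff.2 (mem_sup_right (mem_bimoduleSpan_self M e))))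
  exact hT

end Subalgebra

section StarSubalgebra

variable {R A : Type*} [CommSemiring R] [StarRing R] [Semiring A] [Algebra R A] [StarRing A]
  [StarModule R A]

theorem starAdjoin_toSubalgebra_of_star_eq {s : Set A} (hs : star s = s) :
    (StarAlgebra.adjoin R s).toSubalgebra = Algebra.adjoin R s := by
  rw [StarAlgebra.adjoin_toSubalgebra, hs, Set.union_self]

theorem star_union_singleton_eq (M : StarSubalgebra R A) {e : A} (he : star e = e) :
    star ((M : Set A) ∪ {e}) = (M : Set A) ∪ {e} := by
  rw [Set.union_star, StarMemClass.star_coe_eq, Set.star_singleton, he]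

theorem coe_starAdjoin_union_singleton (M : StarSubalgebra R A) {e : A} (he : star e = e)
    (h : ∀ x ∈ M, e * x * e ∈ (M : Set A) +
      (Submodule.span R {z : A | ∃ x ∈ M, ∃ y ∈ M, z = x * e * y} : Set A)) :
    (StarAlgebra.adjoin R ((M : Set A) ∪ {e}) : Set A) =
      (M : Set A) + (Submodule.span R {z : A | ∃ x ∈ M, ∃ y ∈ M, z = x * e * y} : Set A) := by
  have hsup : ((M.toSubalgebra.toSubmodule ⊔ bimoduleSpan M.toSubalgebra e : Submodule R A) :
      Set A) =
      (M : Set A) + (Submodule.span R {z : A | ∃ x ∈ M, ∃ y ∈ M, z = x * e * y} : Set A) := by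
    rw [bimoduleSpan_eq_span, Submodule.coe_sup]
    rfl
  rw [← hsup] at h ⊢
  rw [← StarSubalgebra.coe_toSubalgebra,
    starAdjoin_toSubalgebra_of_star_eq (star_union_singleton_eq M he)]
  exact congrArg SetLike.coe (toSubmodule_adjoin_union_singleton (M := M.toSubalgebra) h)

theorem stmt9_general (M : StarSubalgebra R A) (e : A) (he : star e = e) :
    (∃ T : StarSubalgebra R A,
      (T : Set A) =
        (M : Set A) +
          (Submodule.span R {z : A | ∃ x ∈ M, ∃ y ∈ M, z = x * e * y} : Set A) ∧
      M ≤ T ∧ e ∈ T ∧ T = StarAlgebra.adjoin R ((M : Set A) ∪ {e})) ↔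
    ∀ x ∈ M, e * x * e ∈
      (M : Set A) +
        (Submodule.span R {z : A | ∃ x ∈ M, ∃ y ∈ M, z = x * e * y} : Set A) := by
  constructor
  · rintro ⟨T, hT, hMT, heT, -⟩ x hx
    rw [← hT]
    exact mul_mem (mul_mem heT (hMT hx)) heT
  · intro h
    exact ⟨StarAlgebra.adjoin R ((M : Set A) ∪ {e}), coe_starAdjoin_union_singleton M he h,
      fun _ hx ↦ StarAlgebra.subset_adjoin R _ (.inl hx),
      StarAlgebra.subset_adjoin R _ (.inr rfl), rfl⟩

end StarSubalgebra

theorem stmt9 {A : Type*} [Ring A] [Algebra ℂ A] [StarRing A] [StarModule ℂ A]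
    (M : StarSubalgebra ℂ A) (e : A) (he : star e = e) (he2 : e * e = e)
    (E : M →ₗ[ℂ] M)
    (hE : ∀ x : M, e * (x : A) * e = (E x : A) * e) :
    ∃ T : StarSubalgebra ℂ A,
      (T : Set A) =
        (M : Set A) +
          (Submodule.span ℂ {z : A | ∃ x ∈ M, ∃ y ∈ M, z = x * e * y} : Set A) ∧
      M ≤ T ∧ e ∈ T ∧ T = StarAlgebra.adjoin ℂ ((M : Set A) ∪ {e}) :=
  (stmt9_general M e he).2 fun x hx ↦ ⟨0, zero_mem M, E ⟨x, hx⟩ * e,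
    Submodule.subset_span ⟨_, (E ⟨x, hx⟩).2, 1, one_mem M, (mul_one _).symm⟩,
    (zero_add _).trans (hE ⟨x, hx⟩).symm⟩
end
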